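/- arXiv:1305.3546 — 2 statements merged into one kernel-verified Lean document; each statement's English description precedes it below -/
import Mathlib

section
/- Let n ≥ 1 and p ∈ [1, ∞]. The identity map Id from ℓ_p^n (that is, ℝⁿ with the ℓ_p norm) to ℓ_2^n (ℝⁿ with the Euclidean norm) satisfies ‖Id‖·‖Id⁻¹‖ = n^{|1/2 − 1/p|}. In particular the Banach–Mazur distance satisfies d(ℓ_p^n, ℓ_2^n) ≤ n^{|1/2 − 1/p|}. -/
/-!
Both operator norms are instances of one formula,
`‖Id : ℓ_p → ℓ_q‖ = card ι ^ max (1/q - 1/p) 0`.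
For `p ≤ q` the `ℓ_q` norm is at most the `ℓ_p` norm, with equality at a vector supported on one
coordinate; for `q ≤ p` the power mean inequality bounds the `ℓ_q` norm by `card ι ^ (1/q - 1/p)`
times the `ℓ_p` norm, with equality at constant vectors.
The junk value `1 / ∞.toReal = 0` agrees with the convention `1/∞ = 0`, so `p = ∞` and `q = ∞` are
included.
-/

section PowerSums

open scoped NNReal

variable {ι : Type*} (s : Finset ι) (f : ι → ℝ≥0)

theorem sum_rpow_le_rpow_sum {r : ℝ} (hr : 1 ≤ r) : ∑ i ∈ s, f i ^ r ≤ (∑ i ∈ s, f i) ^ r := by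
  induction s using Finset.cons_induction with
  | empty => simp
  | cons a s ha ih =>
    rw [Finset.sum_cons, Finset.sum_cons]
    calc f a ^ r + ∑ i ∈ s, f i ^ r ≤ f a ^ r + (∑ i ∈ s, f i) ^ r := by gcongr
      _ ≤ (f a + ∑ i ∈ s, f i) ^ r := NNReal.add_rpow_le_rpow_add _ _ hr

theorem sum_rpow_eq_sum_rpow_rpow_div {p : ℝ} (hp : p ≠ 0) (q : ℝ) :
    ∑ i ∈ s, f i ^ q = ∑ i ∈ s, (f i ^ p) ^ (q / p) := by
  simp only [← NNReal.rpow_mul, mul_div_cancel₀ q hp]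

theorem rpow_sum_rpow_antitoneOn :
    AntitoneOn (fun p : ℝ ↦ (∑ i ∈ s, f i ^ p) ^ (1 / p)) (Set.Ioi 0) := by
  intro p (hp : 0 < p) q (hq : 0 < q) hpq
  calc (∑ i ∈ s, f i ^ q) ^ (1 / q) = (∑ i ∈ s, (f i ^ p) ^ (q / p)) ^ (1 / q) := by
        rw [sum_rpow_eq_sum_rpow_rpow_div s f hp.ne']
    _ ≤ ((∑ i ∈ s, f i ^ p) ^ (q / p)) ^ (1 / q) := by
        gcongr
        exact sum_rpow_le_rpow_sum s _ ((one_le_div hp).2 hpq)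
    _ = (∑ i ∈ s, f i ^ p) ^ (1 / p) := by
        rw [← NNReal.rpow_mul]
        congr 1
        field_simp

theorem rpow_sum_rpow_le_card_rpow_mul {p q : ℝ} (hp : 0 < p) (hpq : p ≤ q) :
    (∑ i ∈ s, f i ^ p) ^ (1 / p) ≤
      (s.card : ℝ≥0) ^ (1 / p - 1 / q) * (∑ i ∈ s, f i ^ q) ^ (1 / q) := by
  have hq : 0 < q := hp.trans_le hpq
  calc (∑ i ∈ s, f i ^ p) ^ (1 / p) = ((∑ i ∈ s, f i ^ p) ^ (q / p)) ^ (1 / q) := by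
        rw [← NNReal.rpow_mul]
        congr 1
        field_simp
    _ ≤ ((s.card : ℝ≥0) ^ (q / p - 1) * ∑ i ∈ s, (f i ^ p) ^ (q / p)) ^ (1 / q) := by
        gcongr
        exact NNReal.rpow_sum_le_const_mul_sum_rpow s _ ((one_le_div hp).2 hpq)
    _ = (s.card : ℝ≥0) ^ (1 / p - 1 / q) * (∑ i ∈ s, f i ^ q) ^ (1 / q) := by
        rw [← sum_rpow_eq_sum_rpow_rpow_div s f hp.ne', NNReal.mul_rpow, ← NNReal.rpow_mul]
        congr 2
        field_simp

end PowerSums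

open scoped ENNReal in
theorem one_div_toReal_le_one_div_toReal {p q : ℝ≥0∞} (hp : p ≠ 0) (hpq : p ≤ q) :
    1 / q.toReal ≤ 1 / p.toReal := by
  simpa only [ENNReal.toReal_inv, one_div] using
    ENNReal.toReal_mono (ENNReal.inv_ne_top.2 hp) (ENNReal.inv_le_inv.2 hpq)

section PiLpNorm

open scoped ENNReal NNReal

variable {ι : Type*} [Fintype ι] {β : ι → Type*} [∀ i, SeminormedAddCommGroup (β i)]
  {p q : ℝ≥0∞} [Fact (1 ≤ p)] [Fact (1 ≤ q)]

theorem nnnorm_toLp_le_of_le (hpq : p ≤ q) (v : ∀ i, β i) :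
    ‖WithLp.toLp q v‖₊ ≤ ‖WithLp.toLp p v‖₊ := by
  rcases eq_or_ne q ∞ with rfl | hq
  · simpa only [PiLp.nnnorm_toLp, Pi.nnnorm_def, Finset.sup_le_iff] using
      fun i _ ↦ PiLp.nnnorm_apply_le (WithLp.toLp p v) i
  · have hp : p ≠ ∞ := ne_top_of_le_ne_top hq hpq
    rw [PiLp.nnnorm_eq_sum hp, PiLp.nnnorm_eq_sum hq]
    exact rpow_sum_rpow_antitoneOn _ _ (p.toReal_pos_iff_ne_top.2 hp)
      (q.toReal_pos_iff_ne_top.2 hq) (ENNReal.toReal_mono hq hpq)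

theorem nnnorm_toLp_le_card_rpow_mul (hpq : p ≤ q) (v : ∀ i, β i) :
    ‖WithLp.toLp p v‖₊ ≤
      (Fintype.card ι : ℝ≥0) ^ (1 / p.toReal - 1 / q.toReal) * ‖WithLp.toLp q v‖₊ := by
  rcases eq_or_ne q ∞ with rfl | hq
  · simpa using (PiLp.lipschitzWith_toLp p β).nnorm_le_mul (WithLp.toLp_zero p) v
  · have hp : p ≠ ∞ := ne_top_of_le_ne_top hq hpq
    rw [PiLp.nnnorm_eq_sum hp, PiLp.nnnorm_eq_sum hq]
    exact rpow_sum_rpow_le_card_rpow_mul _ _ (p.toReal_pos_iff_ne_top.2 hp)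
      (ENNReal.toReal_mono hq hpq)

end PiLpNorm

section Identity

open scoped ENNReal

variable (𝕜 : Type*) [NontriviallyNormedField 𝕜] (ι : Type*)
  (E : Type*) [SeminormedAddCommGroup E] [NormedSpace 𝕜 E]
  (p q : ℝ≥0∞)

/-- The identity of `ι → E` as a continuous linear equivalence from the `ℓ_p` norm to the `ℓ_q`
norm. -/
noncomputable def piLpIdentity : PiLp p (fun _ : ι ↦ E) ≃L[𝕜] PiLp q (fun _ : ι ↦ E) :=
  (PiLp.continuousLinearEquiv p 𝕜 fun _ : ι ↦ E).trans
    (PiLp.continuousLinearEquiv q 𝕜 fun _ : ι ↦ E).symm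

theorem piLpIdentity_symm : (piLpIdentity 𝕜 ι E p q).symm = piLpIdentity 𝕜 ι E q p := rfl

theorem piLpIdentity_toLp (v : ι → E) :
    piLpIdentity 𝕜 ι E p q (WithLp.toLp p v) = WithLp.toLp q v := rfl

variable [Fintype ι] [Nonempty ι] [NontrivialTopology E] [Fact (1 ≤ p)] [Fact (1 ≤ q)]

variable {p q} in
theorem norm_piLpIdentity_of_le (hpq : p ≤ q) :
    ‖(piLpIdentity 𝕜 ι E p q : PiLp p (fun _ : ι ↦ E) →L[𝕜] PiLp q (fun _ : ι ↦ E))‖ = 1 := by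
  classical
  refine ContinuousLinearMap.opNorm_eq_of_bounds zero_le_one (fun x ↦ ?_) fun C _ hC ↦ ?_
  · rw [one_mul]
    exact nnnorm_toLp_le_of_le hpq x.ofLp
  · obtain ⟨i⟩ := ‹Nonempty ι›
    obtain ⟨e, he⟩ := exists_norm_ne_zero E
    have hCe := hC (WithLp.toLp p (Pi.single i e))
    rw [ContinuousLinearEquiv.coe_coe, piLpIdentity_toLp, PiLp.toLp_single, PiLp.toLp_single,
      PiLp.norm_single, PiLp.norm_single] at hCe
    exact one_le_of_le_mul_right₀ ((norm_nonneg e).lt_of_ne' he) hCe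

variable {p q} in
theorem norm_piLpIdentity_of_ge (hqp : q ≤ p) :
    ‖(piLpIdentity 𝕜 ι E p q : PiLp p (fun _ : ι ↦ E) →L[𝕜] PiLp q (fun _ : ι ↦ E))‖ =
      (Fintype.card ι : ℝ) ^ (1 / q.toReal - 1 / p.toReal) := by
  have hcard : (0 : ℝ) < Fintype.card ι := mod_cast Fintype.card_pos
  refine ContinuousLinearMap.opNorm_eq_of_bounds (by positivity) (fun x ↦ ?_) fun C _ hC ↦ ?_
  · exact mod_cast nnnorm_toLp_le_card_rpow_mul hqp x.ofLp
  · obtain ⟨e, he⟩ := exists_norm_ne_zero E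
    have he_pos : 0 < ‖e‖ := (norm_nonneg e).lt_of_ne' he
    have hCe : (Fintype.card ι : ℝ) ^ (1 / q.toReal) * ‖e‖ ≤
        C * (Fintype.card ι : ℝ) ^ (1 / p.toReal) * ‖e‖ := by
      simpa [piLpIdentity_toLp, PiLp.norm_toLp_const', mul_assoc] using
        hC (WithLp.toLp p (Function.const ι e))
    rw [Real.rpow_sub hcard, div_le_iff₀ (by positivity)]
    exact le_of_mul_le_mul_right hCe he_pos

theorem norm_piLpIdentity :
    ‖(piLpIdentity 𝕜 ι E p q : PiLp p (fun _ : ι ↦ E) →L[𝕜] PiLp q (fun _ : ι ↦ E))‖ =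
      (Fintype.card ι : ℝ) ^ max (1 / q.toReal - 1 / p.toReal) 0 := by
  have ne_zero (r : ℝ≥0∞) [hr : Fact (1 ≤ r)] : r ≠ 0 := (zero_lt_one.trans_le hr.out).ne'
  rcases le_total p q with hpq | hqp
  · rw [norm_piLpIdentity_of_le 𝕜 ι E hpq, max_eq_right, Real.rpow_zero]
    exact sub_nonpos.2 (one_div_toReal_le_one_div_toReal (ne_zero p) hpq)
  · rw [norm_piLpIdentity_of_ge 𝕜 ι E hqp, max_eq_left]
    exact sub_nonneg.2 (one_div_toReal_le_one_div_toReal (ne_zero q) hqp)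

theorem lp_identity_norms_general :
    ‖(piLpIdentity 𝕜 ι E p q : PiLp p (fun _ : ι ↦ E) →L[𝕜] PiLp q (fun _ : ι ↦ E))‖ *
      ‖((piLpIdentity 𝕜 ι E p q).symm :
        PiLp q (fun _ : ι ↦ E) →L[𝕜] PiLp p (fun _ : ι ↦ E))‖ =
      (Fintype.card ι : ℝ) ^ |1 / q.toReal - 1 / p.toReal| := by
  have hcard : (0 : ℝ) < Fintype.card ι := mod_cast Fintype.card_pos
  rw [piLpIdentity_symm, norm_piLpIdentity, norm_piLpIdentity, ← Real.rpow_add hcard,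
    ← neg_sub (1 / q.toReal), max_zero_add_max_neg_zero_eq_abs_self]

end Identity

/-- The identity map from `ℓ_p^n` to `ℓ_2^n` (realized as the continuous linear
equivalence induced by the identity of `ℝⁿ`) satisfies `‖Id‖·‖Id⁻¹‖ = n^{|1/2 − 1/p|}`;
in particular the Banach–Mazur distance `d(ℓ_p^n, ℓ_2^n)` is at most `n^{|1/2 − 1/p|}`.
(When `p = ∞`, `1/p` is interpreted as `0`.) -/
theorem lp_identity_norms (n : ℕ) (hn : 1 ≤ n) (p : ENNReal) [Fact (1 ≤ p)] :
    ‖(((PiLp.continuousLinearEquiv p ℝ (fun _ : Fin n => ℝ)).trans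
          (PiLp.continuousLinearEquiv 2 ℝ (fun _ : Fin n => ℝ)).symm :
        PiLp p (fun _ : Fin n => ℝ) ≃L[ℝ] PiLp 2 (fun _ : Fin n => ℝ)) :
        PiLp p (fun _ : Fin n => ℝ) →L[ℝ] PiLp 2 (fun _ : Fin n => ℝ))‖ *
    ‖(((PiLp.continuousLinearEquiv p ℝ (fun _ : Fin n => ℝ)).trans
          (PiLp.continuousLinearEquiv 2 ℝ (fun _ : Fin n => ℝ)).symm).symm :
        PiLp 2 (fun _ : Fin n => ℝ) →L[ℝ] PiLp p (fun _ : Fin n => ℝ))‖ =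
      (n : ℝ) ^ |1 / 2 - 1 / p.toReal| := by
  have : Nonempty (Fin n) := Fin.pos_iff_nonempty.1 hn
  simpa [piLpIdentity] using lp_identity_norms_general ℝ (Fin n) ℝ p 2
end

section
/- Let n ≥ 1, let p ∈ [1, ∞], and suppose the von Neumann–Jordan constant of ℓ_p^n equals ε + 1, i.e. ε + 1 = 2^{|2 − p|/p} (interpreted as ε + 1 = 2 when p = ∞). Then the Banach–Mazur distance satisfies d(ℓ_p^n, ℓ_2^n) ≤ n^{log₂(ε + 1)/2}; that is, there is a linear isomorphism Λ : ℓ_p^n → ℓ_2^n with ‖Λ‖·‖Λ⁻¹‖ ≤ n^{log₂(ε + 1)/2}. -/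
/-!
The identity map `ℓ_p^n → ℓ_q^n` already realises the bound. For `p ≤ q` the `ℓ_q` norm is at most
the `ℓ_p` norm, by subadditivity of `t ↦ t ^ (p / q)`, and the `ℓ_p` norm is at most
`n ^ (1 / p - 1 / q)` times the `ℓ_q` norm, by Hölder's inequality for the counting measure.
With `q = 2`, `log₂ (2 ^ (|2 - p| / p)) / 2 = |1 / p - 1 / 2|`. At `p = ∞` the junk values
`1 / ∞.toReal = 1 / 0 = 0` are the intended ones.
-/

open MeasureTheory Measure
open scoped ENNReal

theorem rpow_tsum_le_tsum_rpow {ι : Type*} (f : ι → ℝ≥0∞) {r : ℝ} (hr₀ : 0 < r) (hr₁ : r ≤ 1) :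
    (∑' i, f i) ^ r ≤ ∑' i, f i ^ r := by
  rw [← ENNReal.le_rpow_inv_iff hr₀, ENNReal.tsum_eq_iSup_sum]
  refine iSup_le fun s ↦ (ENNReal.le_rpow_inv_iff hr₀).2 ?_
  calc (∑ i ∈ s, f i) ^ r ≤ ∑ i ∈ s, f i ^ r :=
        Finset.le_sum_of_subadditive (· ^ r) (ENNReal.zero_rpow_of_pos hr₀).le
          (fun a b ↦ ENNReal.rpow_add_le_add_rpow a b hr₀.le hr₁) s f
    _ ≤ ∑' i, f i ^ r := ENNReal.sum_le_tsum s

theorem one_div_toReal_anti {p q : ℝ≥0∞} (hp₀ : p ≠ 0) (hpq : p ≤ q) :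
    1 / q.toReal ≤ 1 / p.toReal := by
  simp only [one_div, ← ENNReal.toReal_inv]
  exact ENNReal.toReal_mono (ENNReal.inv_ne_top.2 hp₀) (ENNReal.inv_le_inv.2 hpq)

section CountingMeasure

variable {α E : Type*} [MeasurableSpace α] [MeasurableSingletonClass α]

theorem eLpNorm_count_eq_tsum [ENorm E] (f : α → E) {p : ℝ≥0∞} (hp₀ : p ≠ 0) (hp : p ≠ ∞) :
    eLpNorm f p count = (∑' a, ‖f a‖ₑ ^ p.toReal) ^ (1 / p.toReal) := by
  rw [eLpNorm_eq_lintegral_rpow_enorm_toReal hp₀ hp, lintegral_count]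

theorem eLpNorm_count_anti [TopologicalSpace E] [ContinuousENorm E] (f : α → E) {p q : ℝ≥0∞}
    (hp₀ : p ≠ 0) (hpq : p ≤ q) : eLpNorm f q count ≤ eLpNorm f p count := by
  obtain rfl | hq := eq_or_ne q ∞
  · rw [eLpNorm_exponent_top, eLpNormEssSup_count]
    exact iSup_le fun a ↦ enorm_le_eLpNorm_count f a hp₀
  have hp : p ≠ ∞ := ne_top_of_le_ne_top hq hpq
  have hp' : 0 < p.toReal := ENNReal.toReal_pos hp₀ hp
  have hpq' : p.toReal ≤ q.toReal := ENNReal.toReal_mono hq hpq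
  have hq' : 0 < q.toReal := hp'.trans_le hpq'
  rw [eLpNorm_count_eq_tsum f (hp₀.bot_lt.trans_le hpq).ne' hq, eLpNorm_count_eq_tsum f hp₀ hp]
  calc (∑' a, ‖f a‖ₑ ^ q.toReal) ^ (1 / q.toReal)
      = ((∑' a, ‖f a‖ₑ ^ q.toReal) ^ (p.toReal / q.toReal)) ^ (1 / p.toReal) := by
        rw [← ENNReal.rpow_mul]
        congr 1
        field_simp
    _ ≤ (∑' a, (‖f a‖ₑ ^ q.toReal) ^ (p.toReal / q.toReal)) ^ (1 / p.toReal) := by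
        gcongr
        exact rpow_tsum_le_tsum_rpow _ (div_pos hp' hq') ((div_le_one hq').2 hpq')
    _ = (∑' a, ‖f a‖ₑ ^ p.toReal) ^ (1 / p.toReal) := by
        simp_rw [← ENNReal.rpow_mul, mul_div_cancel₀ p.toReal hq'.ne']

end CountingMeasure

section FiniteProduct

variable {ι : Type*} [Fintype ι] {β : ι → Type*} [∀ i, SeminormedAddCommGroup (β i)] {p q : ℝ≥0∞}

theorem norm_toLp_eq_toReal_eLpNorm_count [MeasurableSpace ι] [MeasurableSingletonClass ι]
    (hp₀ : p ≠ 0) (x : ∀ i, β i) :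
    ‖WithLp.toLp p x‖ = (eLpNorm (fun i ↦ ‖x i‖) p count).toReal := by
  obtain rfl | hp := eq_or_ne p ∞
  · rw [PiLp.norm_eq_ciSup, eLpNorm_exponent_top, eLpNormEssSup_count,
      ENNReal.toReal_iSup fun _ ↦ enorm_ne_top]
    simp only [toReal_enorm, norm_norm]
  · rw [eLpNorm_count_eq_tsum _ hp₀ hp, PiLp.norm_eq_sum (ENNReal.toReal_pos hp₀ hp),
      tsum_fintype, ← ENNReal.toReal_rpow, ENNReal.toReal_sum fun i _ ↦ by finiteness]
    simp only [← ENNReal.toReal_rpow, toReal_enorm, norm_norm]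

theorem norm_toLp_anti (hp₀ : p ≠ 0) (hpq : p ≤ q) (x : ∀ i, β i) :
    ‖WithLp.toLp q x‖ ≤ ‖WithLp.toLp p x‖ := by
  let _ : MeasurableSpace ι := ⊤
  rw [norm_toLp_eq_toReal_eLpNorm_count (hp₀.bot_lt.trans_le hpq).ne',
    norm_toLp_eq_toReal_eLpNorm_count hp₀]
  exact ENNReal.toReal_mono (eLpNorm_count_lt_top_of_lt fun _ ↦ enorm_lt_top).ne
    (eLpNorm_count_anti _ hp₀ hpq)

theorem norm_toLp_le_card_rpow_mul (hp₀ : p ≠ 0) (hpq : p ≤ q) (x : ∀ i, β i) :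
    ‖WithLp.toLp p x‖ ≤
      (Fintype.card ι : ℝ) ^ (1 / p.toReal - 1 / q.toReal) * ‖WithLp.toLp q x‖ := by
  let _ : MeasurableSpace ι := ⊤
  have hexp : 0 ≤ 1 / p.toReal - 1 / q.toReal := sub_nonneg.2 (one_div_toReal_anti hp₀ hpq)
  have hfinite : eLpNorm (fun i ↦ ‖x i‖) q count ≠ ∞ :=
    (eLpNorm_count_lt_top_of_lt fun _ ↦ enorm_lt_top).ne
  have holder : eLpNorm (fun i ↦ ‖x i‖) p count ≤
      (Fintype.card ι : ℝ≥0∞) ^ (1 / p.toReal - 1 / q.toReal) *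
        eLpNorm (fun i ↦ ‖x i‖) q count := by
    simpa [mul_comm] using eLpNorm_le_eLpNorm_mul_rpow_measure_univ
      (f := fun i ↦ ‖x i‖) (μ := count) hpq .of_discrete
  rw [norm_toLp_eq_toReal_eLpNorm_count hp₀,
    norm_toLp_eq_toReal_eLpNorm_count (hp₀.bot_lt.trans_le hpq).ne',
    ← ENNReal.toReal_natCast, ENNReal.toReal_rpow, ← ENNReal.toReal_mul]
  exact ENNReal.toReal_mono (by finiteness) holder

variable (𝕜 : Type*) [NontriviallyNormedField 𝕜] [∀ i, NormedSpace 𝕜 (β i)]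

variable (β p q) in
/-- The identity map between the `ℓ_p` and `ℓ_q` products of the same finite family of normed
spaces, which bounds their Banach–Mazur distance from above. -/
noncomputable def piLpExponentEquiv [Fact (1 ≤ p)] [Fact (1 ≤ q)] : PiLp p β ≃L[𝕜] PiLp q β :=
  (PiLp.continuousLinearEquiv p 𝕜 β).trans (PiLp.continuousLinearEquiv q 𝕜 β).symm

theorem norm_piLpExponentEquiv_mul_norm_le_of_le [Fact (1 ≤ p)] [Fact (1 ≤ q)] (hpq : p ≤ q) :
    ‖(piLpExponentEquiv β p q 𝕜 : PiLp p β →L[𝕜] PiLp q β)‖ *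
        ‖(piLpExponentEquiv β q p 𝕜 : PiLp q β →L[𝕜] PiLp p β)‖ ≤
      (Fintype.card ι : ℝ) ^ |1 / p.toReal - 1 / q.toReal| := by
  have hp₀ : p ≠ 0 := (zero_lt_one.trans_le Fact.out).ne'
  rw [abs_of_nonneg (sub_nonneg.2 (one_div_toReal_anti hp₀ hpq)), ← one_mul (_ ^ _)]
  gcongr
  · exact ContinuousLinearMap.opNorm_le_bound _ zero_le_one fun x ↦
      (norm_toLp_anti hp₀ hpq x.ofLp).trans_eq (one_mul _).symm
  · exact ContinuousLinearMap.opNorm_le_bound _ (by positivity) fun x ↦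
      norm_toLp_le_card_rpow_mul hp₀ hpq x.ofLp

variable (β p q) in
theorem lp_banach_mazur_bound_general [Fact (1 ≤ p)] [Fact (1 ≤ q)] :
    ∃ Λ : PiLp p β ≃L[𝕜] PiLp q β,
      ‖(Λ : PiLp p β →L[𝕜] PiLp q β)‖ * ‖(Λ.symm : PiLp q β →L[𝕜] PiLp p β)‖ ≤
        (Fintype.card ι : ℝ) ^ |1 / p.toReal - 1 / q.toReal| := by
  refine ⟨piLpExponentEquiv β p q 𝕜, ?_⟩
  obtain hpq | hqp := le_total p q
  · exact norm_piLpExponentEquiv_mul_norm_le_of_le 𝕜 hpq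
  · rw [mul_comm, abs_sub_comm]
    exact norm_piLpExponentEquiv_mul_norm_le_of_le 𝕜 hqp

end FiniteProduct

theorem logb_two_div_two_eq_abs_one_div_sub_half {p : ℝ≥0∞} (hp₀ : p ≠ 0) {c : ℝ}
    (hfin : p ≠ ∞ → c = 2 ^ (|2 - p.toReal| / p.toReal)) (hinf : p = ∞ → c = 2) :
    Real.logb 2 c / 2 = |1 / p.toReal - 1 / 2| := by
  obtain hp | hp := eq_or_ne p ∞
  · rw [hinf hp, hp, Real.logb_self_eq_one one_lt_two]
    norm_num
  · have hp' : 0 < p.toReal := ENNReal.toReal_pos hp₀ hp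
    have hdiff : 1 / p.toReal - 1 / 2 = (2 - p.toReal) / p.toReal / 2 := by field_simp
    rw [hfin hp, Real.logb_rpow two_pos (by norm_num), hdiff, abs_div, abs_div, abs_of_pos hp',
      abs_two]

/-- If `ε + 1 = 2^{|2 − p|/p}` is the von Neumann–Jordan constant of `ℓ_p^n`
(interpreted as `ε + 1 = 2` when `p = ∞`), then the Banach–Mazur distance satisfies
`d(ℓ_p^n, ℓ_2^n) ≤ n^{log₂(ε + 1)/2}`: there is a linear isomorphism
`Λ : ℓ_p^n → ℓ_2^n` with `‖Λ‖·‖Λ⁻¹‖ ≤ n^{log₂(ε + 1)/2}`. -/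
theorem lp_banach_mazur_bound (n : ℕ) (hn : 1 ≤ n) (p : ENNReal) [Fact (1 ≤ p)]
    (ε : ℝ) (hε : 0 ≤ ε)
    (hfin : p ≠ ⊤ → ε + 1 = 2 ^ (|2 - p.toReal| / p.toReal))
    (hinf : p = ⊤ → ε + 1 = 2) :
    ∃ Λ : PiLp p (fun _ : Fin n => ℝ) ≃L[ℝ] EuclideanSpace ℝ (Fin n),
      ‖(Λ : PiLp p (fun _ : Fin n => ℝ) →L[ℝ] EuclideanSpace ℝ (Fin n))‖ *
        ‖(Λ.symm : EuclideanSpace ℝ (Fin n) →L[ℝ] PiLp p (fun _ : Fin n => ℝ))‖ ≤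
        (n : ℝ) ^ (Real.logb 2 (ε + 1) / 2) := by
  rw [logb_two_div_two_eq_abs_one_div_sub_half (zero_lt_one.trans_le Fact.out).ne' hfin hinf]
  simpa using lp_banach_mazur_bound_general (fun _ : Fin n ↦ ℝ) p 2 ℝ
end
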